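/- arXiv:2602.01847 — 2 statements merged into one kernel-verified Lean document; each statement's English description precedes it below -/
import Mathlib

section
/- Let H=(V_H,E_H) be a fixed graph with at least two edges, let P be a strict partial order on E_H, let ψ be a label multiplicity distribution, and set ρ_H = min over subgraphs I=(V_I,E_I) of H with at least two edges of |V_I|/(|E_I|−1). If δ:ℕ→(0,1) satisfies δ(n)·n^{ρ_H} → 0 as n→∞, then the probability that a random temporal graph drawn from Γ_{[n]}(ψ) contains (H,P) as a δ(n)-temporal motif tends to 0 as n→∞. -/
open MeasureTheory ProbabilityTheory Filter Set
open scoped ENNReal NNReal Topology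

noncomputable section

namespace RTG

/-- A temporal graph on vertex type `V`, given by the finite set of real time labels
attached to each potential edge (unordered pair of vertices). -/
abbrev TGraph (V : Type*) := Sym2 V → Finset ℝ

/-- `P` is a strict partial order supported on the set `s`. -/
def StrictPartialOrderOn {α : Type*} (s : Set α) (P : α → α → Prop) : Prop :=
  (∀ a, ¬ P a a) ∧ (∀ a b c, P a b → P b c → P a c) ∧ ∀ a b, P a b → a ∈ s ∧ b ∈ s

/-- The temporal graph `Λ` contains `(H, P)` as a `δ`-temporal motif. -/
def Contains {VH V : Type*} (H : SimpleGraph VH) (P : Sym2 VH → Sym2 VH → Prop)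
    (Λ : TGraph V) (δ : ℝ) : Prop :=
  ∃ Φ : VH → V, Function.Injective Φ ∧
    ∃ lab : Sym2 VH → ℝ,
      (∀ e ∈ H.edgeSet, lab e ∈ Λ (Sym2.map Φ e)) ∧
      (∀ e f, P e f → lab e < lab f) ∧
      (∀ e ∈ H.edgeSet, ∀ f ∈ H.edgeSet, lab e - lab f < δ)

/-- The sparsity `ρ_H` of a graph `H`: the minimum over subgraphs with at least two
edges of `|V_I| / (|E_I| - 1)`. -/
def sparsity {VH : Type*} (H : SimpleGraph VH) : ℝ :=
  sInf {x : ℝ | ∃ I : H.Subgraph, 2 ≤ I.edgeSet.ncard ∧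
    x = (I.verts.ncard : ℝ) / ((I.edgeSet.ncard : ℝ) - 1)}

/-- The space of label data on a single edge: a number `k` of labels together with the
tuple of `k` label values (indexed in order of sampling). -/
abbrev LabelSpace := Σ k : ℕ, Fin k → ℝ

/-- The uniform distribution on `(0, 1]`. -/
def unif01 : Measure ℝ := volume.restrict (Set.Ioc 0 1)

/-- The uniform distribution on `{1, …, T}` (as a measure on `ℝ`). -/
def unifDisc (T : ℕ) : Measure ℝ :=
  (T : ℝ≥0∞)⁻¹ • ∑ k ∈ Finset.Icc 1 T, Measure.dirac (k : ℝ)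

/-- The distribution of the label data of a single edge: the number of labels is drawn
according to `ψ` and, independently, each label value is drawn according to `ν`. -/
def edgeMeasure (ν : Measure ℝ) (ψ : Measure ℕ) : Measure LabelSpace :=
  Measure.sum fun k => ψ {k} • (Measure.pi fun _ : Fin k => ν).map (Sigma.mk k)

/-- The doubly random temporal graph model on vertex set `V` with label value
distribution `ν` and label multiplicity distribution `ψ`: all edges receive independent
identically distributed label data. -/
def model (V : Type*) [Fintype V] [DecidableEq V] (ν : Measure ℝ) (ψ : Measure ℕ) :
    Measure (Sym2 V → LabelSpace) :=
  Measure.pi fun _ : Sym2 V => edgeMeasure ν ψ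

/-- The continuous doubly random temporal graph `Γ_V(ψ)`. -/
abbrev contModel (V : Type*) [Fintype V] [DecidableEq V] (ψ : Measure ℕ) :
    Measure (Sym2 V → LabelSpace) := model V unif01 ψ

/-- The discrete doubly random temporal graph `Γ_V(ψ, T)`. -/
abbrev discModel (V : Type*) [Fintype V] [DecidableEq V] (ψ : Measure ℕ) (T : ℕ) :
    Measure (Sym2 V → LabelSpace) := model V (unifDisc T) ψ

/-- The temporal graph determined by a sample `ω` of the model: each non-loop edge
carries the sampled set of labels. -/
def toTGraph {V : Type*} [DecidableEq V] (ω : Sym2 V → LabelSpace) : TGraph V :=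
  fun e => if e.IsDiag then ∅ else Finset.image (ω e).2 Finset.univ

/-- The `T`-discretization of a temporal graph: each label `l` is replaced by `⌈T·l⌉`. -/
def discretize {V : Type*} (T : ℕ) (Λ : TGraph V) : TGraph V :=
  fun e => (Λ e).image fun l => ((⌈(T : ℝ) * l⌉ : ℤ) : ℝ)

/-- `ψ` is a label multiplicity distribution: a probability distribution on `ℕ` with
positive finite mean and finite second moment. -/
def IsLMD (ψ : Measure ℕ) : Prop :=
  IsProbabilityMeasure ψ ∧ Integrable (fun k : ℕ => (k : ℝ)) ψ ∧
    Integrable (fun k : ℕ => (k : ℝ) ^ 2) ψ ∧ 0 < ∫ k, (k : ℝ) ∂ψ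

/-- The mean `r` of a label multiplicity distribution. -/
def lmdMean (ψ : Measure ℕ) : ℝ := ∫ k, (k : ℝ) ∂ψ

/-- The second moment `r₂` of a label multiplicity distribution. -/
def lmdSq (ψ : Measure ℕ) : ℝ := ∫ k, (k : ℝ) ^ 2 ∂ψ

/-- `q = P[Q > 0]` for a label multiplicity distribution. -/
def lmdPos (ψ : Measure ℕ) : ℝ := (ψ {k | 0 < k}).toReal

/-- `v` is reachable from the set `S` by time `t` in the temporal graph `Λ`. -/
def ReachBy {V : Type*} (Λ : TGraph V) (S : Set V) (t : ℝ) (v : V) : Prop :=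
  v ∈ S ∨ ∃ (k : ℕ) (f : ℕ → V) (ts : ℕ → ℝ), 0 < k ∧ f 0 ∈ S ∧ f k = v ∧
    (∀ i < k, ts i ∈ Λ s(f i, f (i + 1))) ∧
    (∀ i j, i < j → j < k → ts i < ts j) ∧ ts (k - 1) ≤ t

/-- The reachability ball `B_Λ(S, t)`. -/
def ball {V : Type*} (Λ : TGraph V) (S : Set V) (t : ℝ) : Set V := {v | ReachBy Λ S t v}

/-- The doubling time of the set `S` in `Λ` (with value `∞` if the reachability ball
never doubles in size). -/
def doubleTime {V : Type*} (Λ : TGraph V) (S : Set V) : ℝ≥0∞ :=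
  ⨅ (t : ℝ) (_ : 0 ≤ t ∧ 2 * S.ncard ≤ (ball Λ S t).ncard), ENNReal.ofReal t

/-- The doubling time of the temporal graph `Λ`: the maximum doubling time over all
nonempty vertex sets of size at most half the number of vertices. -/
def doubleAll {V : Type*} [Fintype V] (Λ : TGraph V) : ℝ≥0∞ :=
  ⨆ (S : Set V) (_ : S.Nonempty ∧ 2 * S.ncard ≤ Fintype.card V), doubleTime Λ S

/-- `Double⁻`: the maximum doubling time over nonempty sets of size at most `n/4`. -/
def doubleSmall {V : Type*} [Fintype V] (Λ : TGraph V) : ℝ≥0∞ :=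
  ⨆ (S : Set V) (_ : S.Nonempty ∧ 4 * S.ncard ≤ Fintype.card V), doubleTime Λ S

/-- `Double⁺`: the maximum doubling time over sets of size in `(n/4, n/2]`. -/
def doubleLarge {V : Type*} [Fintype V] (Λ : TGraph V) : ℝ≥0∞ :=
  ⨆ (S : Set V) (_ : Fintype.card V < 4 * S.ncard ∧ 2 * S.ncard ≤ Fintype.card V),
    doubleTime Λ S

/-- The partial reversal `ℛ(Λ, t)`: every label `l < t` is replaced by `t - l`. -/
def reverse {V : Type*} (Λ : TGraph V) (t : ℝ) : TGraph V :=
  fun e => (Λ e).image fun l => if l < t then t - l else l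

/-- The rank of a time `x` among all the labels of the sample `ω`: the number of labels
(on genuine, non-loop, edges) that are at most `x`. -/
def rank {V : Type*} [Fintype V] [DecidableEq V] (ω : Sym2 V → LabelSpace) (x : ℝ) : ℕ :=
  ∑ e ∈ Finset.univ.filter (fun e : Sym2 V => ¬ e.IsDiag),
    Nat.card {i : Fin (ω e).1 // (ω e).2 i ≤ x}

/-- The order discretization `𝒢^O` of the sample `ω`: each label is replaced by its rank
among all labels. -/
def orderDisc {V : Type*} [Fintype V] [DecidableEq V] (ω : Sym2 V → LabelSpace) :
    TGraph V :=
  fun e => if e.IsDiag then ∅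
    else Finset.image (fun i => (rank ω ((ω e).2 i) : ℝ)) Finset.univ


/-- The set of label data with some label in `J`. -/
def hitSet (J : Set ℝ) : Set LabelSpace := {x | ∃ i, x.2 i ∈ J}

lemma measurableSet_labelSpace {s : Set LabelSpace}
    (h : ∀ k, MeasurableSet (Sigma.mk k ⁻¹' s)) : MeasurableSet s := by
  unfold LabelSpace at *
  rw [Sigma.instMeasurableSpace, MeasurableSpace.measurableSet_iInf]
  exact h

lemma measurable_mk (k : ℕ) : Measurable (Sigma.mk (β := fun j : ℕ => Fin j → ℝ) k) := by
  intro s hs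
  rw [Sigma.instMeasurableSpace, MeasurableSpace.measurableSet_iInf] at hs
  exact hs k

lemma preimage_hitSet (J : Set ℝ) (k : ℕ) :
    Sigma.mk (β := fun j : ℕ => Fin j → ℝ) k ⁻¹' hitSet J = ⋃ i, Function.eval i ⁻¹' J := by
  ext x; simp [hitSet]

lemma measurableSet_hitSet {J : Set ℝ} (hJ : MeasurableSet J) : MeasurableSet (hitSet J) := by
  refine measurableSet_labelSpace fun k => ?_
  rw [preimage_hitSet]
  exact MeasurableSet.iUnion fun i => (measurable_pi_apply i) hJ

instance : IsProbabilityMeasure unif01 := ⟨by simp [unif01]⟩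

instance (ν : Measure ℝ) [IsProbabilityMeasure ν] (ψ : Measure ℕ) [IsProbabilityMeasure ψ] :
    IsProbabilityMeasure (edgeMeasure ν ψ) := ⟨by
  rw [edgeMeasure, Measure.sum_apply _ MeasurableSet.univ]
  have : ∀ k : ℕ, (ψ {k} • (Measure.pi fun _ : Fin k => ν).map
      (Sigma.mk (β := fun j : ℕ => Fin j → ℝ) k)) univ = ψ {k} := by
    intro k
    rw [Measure.smul_apply, Measure.map_apply (measurable_mk k) MeasurableSet.univ]
    simp
  simp_rw [this]
  have h := lintegral_countable' (μ := ψ) (fun _ => 1)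
  simpa using h.symm⟩

lemma edgeMeasure_hitSet_le (ν : Measure ℝ) [IsProbabilityMeasure ν] (ψ : Measure ℕ)
    {J : Set ℝ} (hJ : MeasurableSet J) :
    edgeMeasure ν ψ (hitSet J) ≤ (∫⁻ k, (k : ℝ≥0∞) ∂ψ) * ν J := by
  rw [edgeMeasure, Measure.sum_apply _ (measurableSet_hitSet hJ), lintegral_countable',
    ← ENNReal.tsum_mul_right]
  refine ENNReal.tsum_le_tsum fun k => ?_
  rw [Measure.smul_apply, Measure.map_apply (measurable_mk k) (measurableSet_hitSet hJ),
    preimage_hitSet, smul_eq_mul, mul_comm (k : ℝ≥0∞), mul_assoc]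
  gcongr
  refine (measure_iUnion_le _).trans ?_
  have : ∀ i : Fin k, (Measure.pi fun _ : Fin k => ν) (Function.eval i ⁻¹' J) = ν J := fun i =>
    (measurePreserving_eval (fun _ : Fin k => ν) i).measure_preimage hJ.nullMeasurableSet
  simp [this]

/-- The window of two consecutive grid cells of length `d`. -/
def window (d : ℝ) (k : ℤ) : Set ℝ := (fun t => ⌊t / d⌋) ⁻¹' {k} ∪ (fun t => ⌊t / d⌋) ⁻¹' {k + 1}

lemma measurable_cell (d : ℝ) : Measurable (fun t : ℝ => ⌊t / d⌋) := by fun_prop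

lemma measurableSet_window (d : ℝ) (k : ℤ) : MeasurableSet (window d k) :=
  (measurable_cell d (measurableSet_singleton _)).union
    (measurable_cell d (measurableSet_singleton _))

lemma cell_le {d : ℝ} (hd : 0 < d) (k : ℤ) :
    unif01 ((fun t => ⌊t / d⌋) ⁻¹' {k}) ≤ ENNReal.ofReal d := by
  refine (Measure.restrict_apply_le _ _).trans ?_
  have : ((fun t => ⌊t / d⌋) ⁻¹' {k}) ⊆ Set.Ico (k * d) ((k + 1) * d) := by
    intro t ht
    simp only [Set.mem_preimage, Set.mem_singleton_iff, Int.floor_eq_iff] at ht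
    rw [le_div_iff₀ hd, div_lt_iff₀ hd] at ht
    exact ht
  refine (measure_mono this).trans ?_
  rw [Real.volume_Ico]
  exact ENNReal.ofReal_le_ofReal (by linarith)

lemma window_le {d : ℝ} (hd : 0 < d) (k : ℤ) :
    unif01 (window d k) ≤ 2 * ENNReal.ofReal d := by
  refine (measure_union_le _ _).trans ?_
  rw [two_mul]
  exact add_le_add (cell_le hd _) (cell_le hd _)

lemma tsum_window_le (d : ℝ) : ∑' k : ℤ, unif01 (window d k) ≤ 2 := by
  have h : ∑' k : ℤ, unif01 ((fun t => ⌊t / d⌋) ⁻¹' {k}) = 1 := by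
    have h0 := tsum_measure_preimage_singleton (μ := unif01) (s := (univ : Set ℤ))
      (Set.to_countable _) (f := fun t : ℝ => ⌊t / d⌋)
      (fun y _ => measurable_cell d (measurableSet_singleton _))
    rw [tsum_univ (fun k : ℤ => unif01 ((fun t => ⌊t / d⌋) ⁻¹' {k}))] at h0
    simpa using h0
  calc ∑' k : ℤ, unif01 (window d k)
      ≤ ∑' k : ℤ, (unif01 ((fun t => ⌊t / d⌋) ⁻¹' {k})
          + unif01 ((fun t => ⌊t / d⌋) ⁻¹' {k + 1})) :=
        ENNReal.tsum_le_tsum fun k => measure_union_le _ _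
    _ = 1 + 1 := by
        have h' := (Equiv.addRight (1 : ℤ)).tsum_eq
          (fun k : ℤ => unif01 ((fun t => ⌊t / d⌋) ⁻¹' {k}))
        simp only [Equiv.coe_addRight] at h'
        rw [ENNReal.tsum_add, h', h]
    _ = 2 := one_add_one_eq_two

lemma event_le {V : Type*} [Fintype V] [DecidableEq V] (ψ : Measure ℕ) [IsProbabilityMeasure ψ]
    {d : ℝ} (hd : 0 < d) (S : Finset (Sym2 V)) (m : ℕ) (hS : S.card = m + 1) :
    contModel V ψ {ω | ∃ k : ℤ, ∀ f ∈ S, ω f ∈ hitSet (window d k)} ≤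
      2 * (∫⁻ k, (k : ℝ≥0∞) ∂ψ) ^ (m + 1) * (2 * ENNReal.ofReal d) ^ m := by
  set R := ∫⁻ k, (k : ℝ≥0∞) ∂ψ
  have h1 : {ω : Sym2 V → LabelSpace | ∃ k : ℤ, ∀ f ∈ S, ω f ∈ hitSet (window d k)} =
      ⋃ k : ℤ, Set.pi univ (fun f => if f ∈ S then hitSet (window d k) else univ) := by
    ext ω
    simp only [Set.mem_ofPred_eq, Set.mem_iUnion, Set.mem_pi, Set.mem_univ, true_imp_iff]
    refine exists_congr fun k => forall_congr' fun f => ?_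
    split_ifs with h <;> simp [h]
  rw [h1]
  refine (measure_iUnion_le _).trans ?_
  have h2 : ∀ k : ℤ, contModel V ψ
      (Set.pi univ (fun f => if f ∈ S then hitSet (window d k) else univ)) ≤
      R ^ (m + 1) * (2 * ENNReal.ofReal d) ^ m * unif01 (window d k) := by
    intro k
    rw [contModel, model, Measure.pi_pi]
    have h3 : ∀ f : Sym2 V, edgeMeasure unif01 ψ
        (if f ∈ S then hitSet (window d k) else univ) =
        if f ∈ S then edgeMeasure unif01 ψ (hitSet (window d k)) else 1 := by
      intro f; split_ifs <;> simp
    simp_rw [h3]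
    rw [Finset.prod_ite_mem, Finset.univ_inter, Finset.prod_const, hS]
    calc _ ≤ (R * unif01 (window d k)) ^ (m + 1) := by
          gcongr; exact edgeMeasure_hitSet_le _ _ (measurableSet_window d k)
      _ = R ^ (m + 1) * unif01 (window d k) ^ m * unif01 (window d k) := by ring
      _ ≤ _ := by gcongr; exact window_le hd k
  refine (ENNReal.tsum_le_tsum h2).trans ?_
  rw [ENNReal.tsum_mul_left]
  calc _ ≤ R ^ (m + 1) * (2 * ENNReal.ofReal d) ^ m * 2 := by gcongr; exact tsum_window_le d
    _ = _ := by ring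

lemma contains_imp {VH V : Type*} [DecidableEq V] (H : SimpleGraph VH)
    (P : Sym2 VH → Sym2 VH → Prop) {d : ℝ} (hd : 0 < d) (ω : Sym2 V → LabelSpace)
    (hc : Contains H P (toTGraph ω) d) (E : Finset (Sym2 VH)) (hE : ∀ e ∈ E, e ∈ H.edgeSet)
    (hne : E.Nonempty) :
    ∃ Φ : VH → V, Function.Injective Φ ∧
      ∃ k : ℤ, ∀ e ∈ E, ω (Sym2.map Φ e) ∈ hitSet (window d k) := by
  obtain ⟨Φ, hΦ, lab, h1, -, h3⟩ := hc
  obtain ⟨e0, he0, hmin⟩ := E.exists_min_image lab hne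
  refine ⟨Φ, hΦ, ⌊lab e0 / d⌋, fun e he => ?_⟩
  have h := h1 e (hE e he)
  unfold toTGraph at h
  split_ifs at h with hdg
  · simp at h
  obtain ⟨i, -, hi⟩ := Finset.mem_image.1 h
  refine ⟨i, ?_⟩
  rw [hi]
  have ha := hmin e he
  have hb := h3 e (hE e he) e0 (hE e0 he0)
  have hc1 : lab e0 / d ≤ lab e / d := by gcongr
  have hc2 : lab e / d < lab e0 / d + 1 := by
    rw [div_lt_iff₀ hd, add_mul, div_mul_cancel₀ _ hd.ne']; linarith
  have hd1 := Int.floor_mono hc1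
  have hd2 : ⌊lab e / d⌋ ≤ ⌊lab e0 / d⌋ + 1 := by
    have := Int.floor_mono hc2.le
    rwa [Int.floor_add_one] at this
  simp only [window, Set.mem_union, Set.mem_preimage, Set.mem_singleton_iff]
  omega

lemma contains_le {VH V : Type*} [Fintype VH] [Fintype V] [DecidableEq V] (H : SimpleGraph VH)
    (P : Sym2 VH → Sym2 VH → Prop) (ψ : Measure ℕ) [IsProbabilityMeasure ψ]
    {d : ℝ} (hd : 0 < d) (I : H.Subgraph) (m : ℕ) (hm : I.edgeSet.ncard = m + 1) :
    contModel V ψ {ω | Contains H P (toTGraph ω) d} ≤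
      (Fintype.card V : ℝ≥0∞) ^ I.verts.ncard *
      (2 * (∫⁻ k, (k : ℝ≥0∞) ∂ψ) ^ (m + 1) * (2 * ENNReal.ofReal d) ^ m) := by
  classical
  set E : Finset (Sym2 VH) := I.edgeSet.toFinset with hEdef
  have hEc : E.card = m + 1 := by rw [← hm, Set.ncard_eq_toFinset_card']
  have hEH : ∀ e ∈ E, e ∈ H.edgeSet := fun e he => I.edgeSet_subset (by simpa [hEdef] using he)
  have hne : E.Nonempty := Finset.card_pos.1 (by omega)
  set B : (I.verts → V) → Set (Sym2 V → LabelSpace) := fun g =>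
    {ω | ∃ Φ : VH → V, Function.Injective Φ ∧ (∀ v : I.verts, Φ v = g v) ∧
      ∃ k : ℤ, ∀ e ∈ E, ω (Sym2.map Φ e) ∈ hitSet (window d k)} with hB
  have hsub : {ω | Contains H P (toTGraph ω) d} ⊆ ⋃ g, B g := by
    intro ω hω
    obtain ⟨Φ, hΦ, h⟩ := contains_imp H P hd ω hω E hEH hne
    exact Set.mem_iUnion.2 ⟨fun v => Φ v, Φ, hΦ, fun _ => rfl, h⟩
  have hBle : ∀ g, contModel V ψ (B g) ≤
      2 * (∫⁻ k, (k : ℝ≥0∞) ∂ψ) ^ (m + 1) * (2 * ENNReal.ofReal d) ^ m := by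
    intro g
    by_cases hg : ∃ Φ : VH → V, Function.Injective Φ ∧ ∀ v : I.verts, Φ v = g v
    · obtain ⟨Φ₀, hinj, hΦ₀⟩ := hg
      refine le_trans (measure_mono ?_) (event_le ψ hd (E.image (Sym2.map Φ₀)) m ?_)
      · rintro ω ⟨Φ, -, hΦg, k, hk⟩
        refine ⟨k, fun f hf => ?_⟩
        obtain ⟨e, he, rfl⟩ := Finset.mem_image.1 hf
        have : Sym2.map Φ₀ e = Sym2.map Φ e := Sym2.map_congr fun x hx => by
          have hx' := I.mem_verts_of_mem_edge (by simpa [hEdef] using he) hx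
          rw [hΦ₀ ⟨x, hx'⟩, hΦg ⟨x, hx'⟩]
        rw [this]
        exact hk e he
      · rw [Finset.card_image_of_injective _ (Sym2.map.injective hinj), hEc]
    · have : B g = ∅ := by
        ext ω
        simp only [hB, Set.mem_ofPred_eq, Set.mem_empty_iff_false, iff_false]
        rintro ⟨Φ, h1, h2, -⟩
        exact hg ⟨Φ, h1, h2⟩
      rw [this]; simp
  refine (measure_mono hsub).trans ((measure_iUnion_le _).trans ?_)
  refine (ENNReal.tsum_le_tsum hBle).trans ?_
  rw [tsum_fintype, Finset.sum_const, nsmul_eq_mul, Finset.card_univ, Fintype.card_fun,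
    ← Nat.card_eq_fintype_card (α := I.verts), Nat.card_coe_set_eq, Nat.cast_pow]

lemma sparsity_attained {VH : Type*} [Fintype VH] (H : SimpleGraph VH)
    (hH : 2 ≤ H.edgeSet.ncard) : ∃ I : H.Subgraph, 2 ≤ I.edgeSet.ncard ∧
    sparsity H = (I.verts.ncard : ℝ) / ((I.edgeSet.ncard : ℝ) - 1) := by
  classical
  have hfin : {x : ℝ | ∃ I : H.Subgraph, 2 ≤ I.edgeSet.ncard ∧
      x = (I.verts.ncard : ℝ) / ((I.edgeSet.ncard : ℝ) - 1)}.Finite := by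
    refine (Set.finite_range (fun I : H.Subgraph =>
      (I.verts.ncard : ℝ) / ((I.edgeSet.ncard : ℝ) - 1))).subset ?_
    rintro x ⟨I, -, rfl⟩
    exact ⟨I, rfl⟩
  refine Set.Nonempty.csInf_mem (s := {x : ℝ | ∃ I : H.Subgraph, 2 ≤ I.edgeSet.ncard ∧
      x = (I.verts.ncard : ℝ) / ((I.edgeSet.ncard : ℝ) - 1)}) ⟨_, ⊤, ?_, rfl⟩ hfin
  simpa using hH

/-- If `δ(n)·n^{ρ_H} → 0`, then a sample of `Γ_{[n]}(ψ)` contains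
`(H, P)` as a `δ(n)`-temporal motif with probability tending to `0`. -/
theorem statement1 {VH : Type} [Fintype VH] [DecidableEq VH] (H : SimpleGraph VH)
    (hH : 2 ≤ H.edgeSet.ncard)
    (P : Sym2 VH → Sym2 VH → Prop) (hP : StrictPartialOrderOn H.edgeSet P)
    (ψ : Measure ℕ) (hψ : IsLMD ψ)
    (δ : ℕ → ℝ) (hδ : ∀ n, δ n ∈ Set.Ioo (0 : ℝ) 1)
    (hthr : Tendsto (fun n : ℕ => δ n * (n : ℝ) ^ sparsity H) atTop (𝓝 0)) :
    Tendsto (fun n : ℕ =>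
        contModel (Fin n) ψ {ω | Contains H P (toTGraph ω) (δ n)})
      atTop (𝓝 0) := by
  obtain ⟨hprob, hint, -, -⟩ := hψ
  obtain ⟨I, hI, hρ⟩ := sparsity_attained H hH
  obtain ⟨m, hm⟩ : ∃ m, I.edgeSet.ncard = m + 1 := ⟨I.edgeSet.ncard - 1, by omega⟩
  have hm0 : m ≠ 0 := by omega
  set R := ∫⁻ k, (k : ℝ≥0∞) ∂ψ with hR
  have hRtop : R ≠ ∞ := by
    have := hint.lintegral_lt_top
    simpa [hR] using this.ne
  have hbound : ∀ n : ℕ, contModel (Fin n) ψ {ω | Contains H P (toTGraph ω) (δ n)} ≤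
      2 * R ^ (m + 1) * 2 ^ m * ENNReal.ofReal (δ n * (n : ℝ) ^ sparsity H) ^ m := by
    intro n
    refine (contains_le H P ψ (hδ n).1 I m hm).trans (le_of_eq ?_)
    have hpow : ((n : ℝ) ^ sparsity H) ^ m = (n : ℝ) ^ I.verts.ncard := by
      rw [← Real.rpow_natCast, ← Real.rpow_mul (Nat.cast_nonneg n), hρ, hm]
      have : (m : ℝ) ≠ 0 := by exact_mod_cast hm0
      rw [← Real.rpow_natCast (n : ℝ) I.verts.ncard]
      congr 1
      push_cast
      rw [add_sub_cancel_right, div_mul_cancel₀ _ this]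
    have h2 : ENNReal.ofReal ((n : ℝ) ^ sparsity H) ^ m = (n : ℝ≥0∞) ^ I.verts.ncard := by
      rw [← ENNReal.ofReal_pow (Real.rpow_nonneg (Nat.cast_nonneg n) _), hpow,
        ENNReal.ofReal_pow (Nat.cast_nonneg n), ENNReal.ofReal_natCast]
    rw [ENNReal.ofReal_mul (hδ n).1.le, mul_pow, mul_pow, h2, Fintype.card_fin]
    ring
  have hlim : Tendsto (fun n : ℕ =>
      2 * R ^ (m + 1) * 2 ^ m * ENNReal.ofReal (δ n * (n : ℝ) ^ sparsity H) ^ m)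
      atTop (𝓝 0) := by
    have h1 : Tendsto (fun n : ℕ => ENNReal.ofReal (δ n * (n : ℝ) ^ sparsity H) ^ m)
        atTop (𝓝 0) := by
      have := ((ENNReal.continuous_pow m).tendsto _).comp (ENNReal.tendsto_ofReal hthr)
      simpa [hm0, Function.comp_def] using this
    have hC : 2 * R ^ (m + 1) * 2 ^ m ≠ ∞ := by
      refine ENNReal.mul_ne_top (ENNReal.mul_ne_top (by simp) (ENNReal.pow_ne_top hRtop))
        (ENNReal.pow_ne_top (by simp))
    have := ENNReal.Tendsto.const_mul h1 (Or.inr hC)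
    simpa using this
  exact tendsto_of_tendsto_of_tendsto_of_le_of_le tendsto_const_nhds hlim
    (fun _ => bot_le) hbound

end RTG
end
end

section
/- Let H=(V_H,E_H) be a fixed graph with at least two edges, let P be a strict partial order on E_H with height(P) the maximum size of a chain in P, let ψ be a label multiplicity distribution, and set ρ_H = min over subgraphs I=(V_I,E_I) of H with at least two edges of |V_I|/(|E_I|−1). Let β,T:ℕ→ℕ with T(n)≥β(n) for all n, and suppose there exists n₀ such that β(n)≥height(P) for all n≥n₀. If β(n)/T(n)·n^{ρ_H} → ∞ as n→∞, then the probability that a random temporal graph drawn from Γ_{[n]}(ψ,T(n)) contains (H,P) as a β(n)-temporal motif tends to 1 as n→∞. -/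
open MeasureTheory ProbabilityTheory Filter Set
open scoped ENNReal NNReal Topology

noncomputable section

namespace RTG

/-! ## Probability tools -/

lemma second_moment {Ω ι : Type*} [MeasurableSpace Ω] (μ : Measure Ω) [IsProbabilityMeasure μ]
    (s : Finset ι) (A : ι → Set Ω) (hA : ∀ i ∈ s, MeasurableSet (A i)) (a ε : ℝ) (ha : 0 < a)
    (hs : s.Nonempty) (hA1 : ∀ i ∈ s, μ.real (A i) = a)
    (h2 : ∑ i ∈ s, ∑ j ∈ s, μ.real (A i ∩ A j) ≤ (1 + ε) * ((s.card : ℝ) * a) ^ 2) :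
    1 - ε ≤ μ.real (⋃ i ∈ s, A i) := by
  classical
  set X : Ω → ℝ := fun ω => ∑ i ∈ s, (A i).indicator 1 ω with hX
  set m : ℝ := (s.card : ℝ) * a with hm
  have hmpos : 0 < m := by
    have : (0 : ℝ) < s.card := by exact_mod_cast hs.card_pos
    positivity
  have hU : MeasurableSet (⋃ i ∈ s, A i) := Finset.measurableSet_biUnion s hA
  have hint1 : ∀ B : Set Ω, MeasurableSet B →
      Integrable (fun ω => B.indicator (1 : Ω → ℝ) ω) μ := fun B hB =>
    (integrable_const (1 : ℝ)).indicator hB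
  have hXi : Integrable X μ := integrable_finsetSum _ fun i hi => hint1 _ (hA i hi)
  have hXe : ∫ ω, X ω ∂μ = m := by
    rw [hX, integral_finsetSum _ fun i hi => hint1 _ (hA i hi)]
    rw [Finset.sum_congr rfl fun i hi => (integral_indicator_one (hA i hi)).trans (hA1 i hi)]
    simp [hm]
  have hX2 : (fun ω => X ω ^ 2) = fun ω => ∑ i ∈ s, ∑ j ∈ s, (A i ∩ A j).indicator 1 ω := by
    funext ω
    rw [sq, hX, Finset.sum_mul_sum]
    refine Finset.sum_congr rfl fun i _ => Finset.sum_congr rfl fun j _ => ?_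
    rw [Set.inter_indicator_one]; rfl
  have hX2i : Integrable (fun ω => X ω ^ 2) μ := by
    rw [hX2]
    exact integrable_finsetSum _ fun i hi => integrable_finsetSum _ fun j hj =>
      hint1 _ ((hA i hi).inter (hA j hj))
  have hX2e : ∫ ω, X ω ^ 2 ∂μ = ∑ i ∈ s, ∑ j ∈ s, μ.real (A i ∩ A j) := by
    rw [hX2, integral_finsetSum _ fun i hi => integrable_finsetSum _ fun j hj =>
      hint1 _ ((hA i hi).inter (hA j hj))]
    refine Finset.sum_congr rfl fun i hi => ?_
    rw [integral_finsetSum _ fun j hj => hint1 _ ((hA i hi).inter (hA j hj))]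
    exact Finset.sum_congr rfl fun j hj => integral_indicator_one ((hA i hi).inter (hA j hj))
  have key : ∫ ω, (2 / m * X ω - 1 / m ^ 2 * X ω ^ 2) ∂μ ≤
      ∫ ω, (⋃ i ∈ s, A i).indicator (1 : Ω → ℝ) ω ∂μ := by
    refine integral_mono ((hXi.const_mul _).sub (hX2i.const_mul _)) (hint1 _ hU) fun ω => ?_
    by_cases hω : ω ∈ ⋃ i ∈ s, A i
    · simp only [Set.indicator_of_mem hω, Pi.one_apply]
      have : 0 ≤ (1 - X ω / m) ^ 2 := sq_nonneg _
      have e : (1 - X ω / m) ^ 2 = 1 - (2 / m * X ω - 1 / m ^ 2 * X ω ^ 2) := by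
        field_simp; ring
      linarith
    · simp only [Set.indicator_of_notMem hω]
      have : X ω = 0 := by
        refine Finset.sum_eq_zero fun i hi => Set.indicator_of_notMem ?_ _
        intro h; exact hω (Set.mem_biUnion hi h)
      simp [this]
  rw [integral_indicator_one hU, integral_sub (hXi.const_mul _) (hX2i.const_mul _),
    integral_const_mul, integral_const_mul, hXe, hX2e] at key
  have h3 : 1 / m ^ 2 * ∑ i ∈ s, ∑ j ∈ s, μ.real (A i ∩ A j) ≤ 1 + ε := by
    rw [one_div, inv_mul_le_iff₀ (by positivity)]; linarith
  have h4 : 2 / m * m = 2 := by field_simp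
  linarith

lemma pi_inj_prob {α ι X : Type*} [Fintype α] [MeasurableSpace X] (Q : Measure X)
    [IsProbabilityMeasure Q] (s : Finset ι) (g : ι → α) (hg : Set.InjOn g s) (S : ι → Set X) :
    (Measure.pi fun _ : α => Q) {ω | ∀ i ∈ s, ω (g i) ∈ S i} = ∏ i ∈ s, Q (S i) := by
  classical
  set D : α → Set X := fun a => ⋂ i ∈ s, ⋂ (_ : g i = a), S i with hD
  have h1 : {ω : α → X | ∀ i ∈ s, ω (g i) ∈ S i} = Set.univ.pi D := by
    ext ω
    simp only [Set.mem_ofPred_eq, Set.mem_pi, Set.mem_univ, true_imp_iff, hD, Set.mem_iInter]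
    constructor
    · rintro h a i hi rfl; exact h i hi
    · intro h i hi; exact h _ i hi rfl
  have h2 : ∀ i ∈ s, D (g i) = S i := by
    intro i hi
    ext x
    simp only [hD, Set.mem_iInter]
    constructor
    · intro h; exact h i hi rfl
    · intro h j hj e
      rw [hg hj hi e]; exact h
  rw [h1, Measure.pi_pi, ← Finset.prod_subset (Finset.subset_univ (s.image g)),
    Finset.prod_image hg]
  · exact Finset.prod_congr rfl fun i hi => by rw [h2 i hi]
  · intro a _ ha
    have : D a = Set.univ := by
      ext x
      simp only [hD, Set.mem_iInter, Set.mem_univ, iff_true]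
      rintro i hi rfl
      exact absurd (Finset.mem_image_of_mem g hi) ha
    rw [this, measure_univ]

/-- The inclusion of `k`-tuples of labels. -/
abbrev mkL (k : ℕ) : (Fin k → ℝ) → LabelSpace := @Sigma.mk ℕ (fun k => Fin k → ℝ) k

/-- The first label exists and belongs to `I`. -/
def firstIn (I : Set ℝ) : Set LabelSpace := {x | ∃ h : 0 < x.1, x.2 ⟨0, h⟩ ∈ I}

lemma measurableSet_sigma' {s : Set LabelSpace}
    (h : ∀ k, MeasurableSet (mkL k ⁻¹' s : Set (Fin k → ℝ))) : MeasurableSet s := by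
  rw [MeasurableSpace.measurableSet_iInf]
  exact h

lemma measurable_mk' (k : ℕ) : Measurable (mkL k) := by
  intro s hs
  have := (MeasurableSpace.measurableSet_iInf.1 hs) k
  exact this

lemma measurableSet_firstIn {I : Set ℝ} (hI : MeasurableSet I) : MeasurableSet (firstIn I) := by
  refine measurableSet_sigma' fun k => ?_
  by_cases hk : 0 < k
  · have : (mkL k ⁻¹' firstIn I : Set (Fin k → ℝ)) = (fun f => f ⟨0, hk⟩) ⁻¹' I := by
      ext f; simp [firstIn, hk]
    rw [this]
    exact measurable_pi_apply _ hI
  · have : (mkL k ⁻¹' firstIn I : Set (Fin k → ℝ)) = ∅ := by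
      ext f; simp [firstIn, hk]
    rw [this]; exact MeasurableSet.empty

lemma edgeMeasure_apply (ν : Measure ℝ) (ψ : Measure ℕ) {s : Set LabelSpace}
    (hs : MeasurableSet s) :
    edgeMeasure ν ψ s = ∑' k, ψ {k} * (Measure.pi fun _ : Fin k => ν) (mkL k ⁻¹' s) := by
  rw [edgeMeasure, Measure.sum_apply _ hs]
  refine tsum_congr fun k => ?_
  rw [Measure.smul_apply, Measure.map_apply (measurable_mk' k) hs, smul_eq_mul]

lemma tsum_singleton (ψ : Measure ℕ) (s : Set ℕ) :
    ∑' k, s.indicator (fun k => ψ {k}) k = ψ s :=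
  Measure.tsum_indicator_apply_singleton ψ s (MeasurableSet.of_discrete)

lemma edgeMeasure_prob (ν : Measure ℝ) [IsProbabilityMeasure ν] (ψ : Measure ℕ)
    [IsProbabilityMeasure ψ] : IsProbabilityMeasure (edgeMeasure ν ψ) := by
  refine ⟨?_⟩
  rw [edgeMeasure_apply _ _ MeasurableSet.univ]
  simp only [Set.preimage_univ, measure_univ, mul_one]
  have := tsum_singleton ψ Set.univ
  simpa using this

lemma edgeMeasure_firstIn (ν : Measure ℝ) [IsProbabilityMeasure ν] (ψ : Measure ℕ)
    {I : Set ℝ} (hI : MeasurableSet I) :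
    edgeMeasure ν ψ (firstIn I) = ψ {k | 0 < k} * ν I := by
  rw [edgeMeasure_apply _ _ (measurableSet_firstIn hI), ← tsum_singleton ψ {k | 0 < k},
    ← ENNReal.tsum_mul_right]
  refine tsum_congr fun k => ?_
  by_cases hk : 0 < k
  · have : (mkL k ⁻¹' firstIn I : Set (Fin k → ℝ)) = Function.eval ⟨0, hk⟩ ⁻¹' I := by
      ext f; simp [firstIn, hk]
    rw [this, (measurePreserving_eval (fun _ : Fin k => ν) ⟨0, hk⟩).measure_preimage
      hI.nullMeasurableSet, Set.indicator_of_mem (by exact hk)]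
  · have : (mkL k ⁻¹' firstIn I : Set (Fin k → ℝ)) = ∅ := by
      ext f; simp [firstIn, hk]
    rw [this, Set.indicator_of_notMem (by exact hk)]
    simp

lemma unifDisc_prob {T : ℕ} (hT : 1 ≤ T) : IsProbabilityMeasure (unifDisc T) := by
  refine ⟨?_⟩
  simp only [unifDisc, Measure.smul_apply, Measure.finsetSum_apply, measure_univ,
    Finset.sum_const, Nat.card_Icc, smul_eq_mul, nsmul_eq_mul, mul_one, Nat.add_sub_cancel]
  exact ENNReal.inv_mul_cancel (by exact_mod_cast (by lia : T ≠ 0)) (ENNReal.natCast_ne_top T)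

lemma unifDisc_Ioc {T u b : ℕ} (h : u + b ≤ T) :
    unifDisc T (Set.Ioc (u : ℝ) ((u + b : ℕ) : ℝ)) = (T : ℝ≥0∞)⁻¹ * b := by
  simp only [unifDisc, Measure.smul_apply, Measure.finsetSum_apply, smul_eq_mul]
  congr 1
  have : ∀ k ∈ Finset.Icc 1 T, (Measure.dirac (k : ℝ)) (Set.Ioc (u : ℝ) ((u + b : ℕ) : ℝ)) =
      if k ∈ Finset.Ioc u (u + b) then (1 : ℝ≥0∞) else 0 := by
    intro k _
    rw [Measure.dirac_apply' _ measurableSet_Ioc, Set.indicator_apply]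
    simp only [Set.mem_Ioc, Finset.mem_Ioc, Nat.cast_lt, Nat.cast_le, Pi.one_apply]
  rw [Finset.sum_congr rfl this, ← Finset.sum_filter, Finset.sum_const]
  have : (Finset.Icc 1 T).filter (fun k => k ∈ Finset.Ioc u (u + b)) = Finset.Ioc u (u + b) := by
    ext k; simp only [Finset.mem_filter, Finset.mem_Icc, Finset.mem_Ioc]; lia
  rw [this]
  simp

lemma lmdPos_pos {ψ : Measure ℕ} (hψ : IsLMD ψ) : 0 < lmdPos ψ := by
  obtain ⟨h1, h2, h3, h4⟩ := hψ
  refine ENNReal.toReal_pos ?_ (measure_ne_top _ _)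
  intro h0
  have : ∀ᵐ k : ℕ ∂ψ, (k : ℝ) = 0 := by
    rw [ae_iff]
    refine measure_mono_null ?_ h0
    intro k hk
    simp only [Set.mem_ofPred_eq, Nat.cast_eq_zero] at hk ⊢
    lia
  rw [integral_congr_ae this] at h4
  simp at h4

/-! ## Combinatorial tools -/

lemma exists_lev {κ : Type*} (E : Finset κ) (hE : E.Nonempty) (P : κ → κ → Prop)
    (hP : StrictPartialOrderOn (E : Set κ) P) :
    ∃ (h : ℕ) (lev : κ → ℕ), 1 ≤ h ∧
      (∃ s : Finset κ, s ⊆ E ∧ IsChain P (s : Set κ) ∧ s.card = h) ∧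
      (∀ e f, P e f → lev e < lev f) ∧ ∀ e ∈ E, lev e < h := by
  classical
  obtain ⟨hirr, htr, hsup⟩ := hP
  set C : Finset (Finset κ) := E.powerset.filter fun s => IsChain P (s : Set κ) with hC
  have hCne : C.Nonempty := ⟨∅, by simp [hC]⟩
  set h := C.sup Finset.card with hh
  set lev : κ → ℕ := fun e => (C.filter fun s => ∀ x ∈ s, P x e).sup Finset.card with hlev
  have hmem : ∀ s, s ∈ C ↔ s ⊆ E ∧ IsChain P (s : Set κ) := by
    intro s; simp [hC]
  have hins : ∀ e ∈ E, ∃ s : Finset κ, s.card = lev e ∧ (∀ x ∈ s, P x e) ∧ e ∉ s ∧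
      insert e s ∈ C := by
    intro e he
    have hne : (C.filter fun s => ∀ x ∈ s, P x e).Nonempty := ⟨∅, by simp [hC]⟩
    obtain ⟨s, hs, hs2⟩ := Finset.exists_mem_eq_sup _ hne Finset.card
    rw [Finset.mem_filter, hmem] at hs
    refine ⟨s, hs2.symm, hs.2, fun hes => hirr e (hs.2 e hes), ?_⟩
    rw [hmem]
    refine ⟨Finset.insert_subset he hs.1.1, ?_⟩
    rw [Finset.coe_insert]
    exact hs.1.2.insert fun b hb _ => Or.inr (hs.2 b hb)
  have hlt : ∀ e ∈ E, lev e < h := by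
    intro e he
    obtain ⟨s, hs1, hs2, hs3, hs4⟩ := hins e he
    have := Finset.le_sup (f := Finset.card) hs4
    rw [Finset.card_insert_of_notMem hs3] at this
    lia
  refine ⟨h, lev, ?_, ?_, ?_, hlt⟩
  · obtain ⟨e, he⟩ := hE
    have := hlt e he
    lia
  · obtain ⟨s, hs, hs2⟩ := Finset.exists_mem_eq_sup _ hCne Finset.card
    exact ⟨s, ((hmem s).1 hs).1, ((hmem s).1 hs).2, hs2.symm⟩
  · intro e f hef
    obtain ⟨s, hs1, hs2, hs3, hs4⟩ := hins e (hsup e f hef).1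
    have : insert e s ∈ C.filter fun s => ∀ x ∈ s, P x f := by
      rw [Finset.mem_filter]
      refine ⟨hs4, fun x hx => ?_⟩
      rcases Finset.mem_insert.1 hx with rfl | hx
      · exact hef
      · exact htr _ _ _ (hs2 x hx) hef
    have := Finset.le_sup (f := Finset.card) this
    rw [Finset.card_insert_of_notMem hs3] at this
    lia

open Classical in
lemma pair_bound {α κ X : Type*} [Fintype α] [MeasurableSpace X] (Q : Measure X)
    [IsProbabilityMeasure Q] (E : Finset κ) (g g' : κ → α) (hg : Set.InjOn g E)
    (hg' : Set.InjOn g' E) (hgg : ∀ e ∈ E, ∀ e' ∈ E, g e = g' e' → e = e')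
    (C C' : κ → Set X) (p : ℝ) (hp : 0 < p) (hC : ∀ e ∈ E, Q.real (C e) = p)
    (hC' : ∀ e ∈ E, Q.real (C' e) = p) :
    (Measure.pi fun _ : α => Q).real
      ({ω | ∀ e ∈ E, ω (g e) ∈ C e} ∩ {ω | ∀ e ∈ E, ω (g' e) ∈ C' e}) ≤
      p ^ (2 * E.card) / p ^ (E.filter fun e => g e = g' e).card := by
  set F := E.filter fun e => g e = g' e with hF
  have hFE : F ⊆ E := Finset.filter_subset _ _
  set s : Finset (κ ⊕ κ) := E.disjSum (E \ F) with hs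
  have hinj : Set.InjOn (Sum.elim g g') s := by
    rintro (x | x) hx (y | y) hy hxy
    · simp only [hs, Finset.mem_coe, Finset.inl_mem_disjSum] at hx hy
      rw [hg hx hy hxy]
    · simp only [hs, Finset.mem_coe, Finset.inl_mem_disjSum, Finset.inr_mem_disjSum,
        Finset.mem_sdiff] at hx hy
      simp only [Sum.elim_inl, Sum.elim_inr] at hxy
      have := hgg x hx y hy.1 hxy
      subst this
      exact absurd (Finset.mem_filter.2 ⟨hx, hxy⟩) hy.2
    · simp only [hs, Finset.mem_coe, Finset.inl_mem_disjSum, Finset.inr_mem_disjSum,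
        Finset.mem_sdiff] at hx hy
      simp only [Sum.elim_inl, Sum.elim_inr] at hxy
      have := hgg y hy x hx.1 hxy.symm
      subst this
      exact absurd (Finset.mem_filter.2 ⟨hy, hxy.symm⟩) hx.2
    · simp only [hs, Finset.mem_coe, Finset.inr_mem_disjSum, Finset.mem_sdiff] at hx hy
      rw [hg' hx.1 hy.1 hxy]
  have h1 : ({ω : α → X | ∀ e ∈ E, ω (g e) ∈ C e} ∩ {ω | ∀ e ∈ E, ω (g' e) ∈ C' e}) ⊆
      {ω | ∀ i ∈ s, ω (Sum.elim g g' i) ∈ Sum.elim C C' i} := by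
    rintro ω ⟨ha, hb⟩ (i | i) hi
    · simp only [hs, Finset.inl_mem_disjSum] at hi
      exact ha i hi
    · simp only [hs, Finset.inr_mem_disjSum, Finset.mem_sdiff] at hi
      exact hb i hi.1
  refine (measureReal_mono h1 (measure_ne_top _ _)).trans (le_of_eq ?_)
  rw [Measure.real, pi_inj_prob Q s _ hinj, ENNReal.toReal_prod, hs, Finset.prod_disjSum]
  simp only [Sum.elim_inl, Sum.elim_inr]
  have e1 : ∏ x ∈ E, (Q (C x)).toReal = p ^ E.card := Finset.prod_eq_pow_card hC
  have e2 : ∏ x ∈ E \ F, (Q (C' x)).toReal = p ^ (E \ F).card :=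
    Finset.prod_eq_pow_card fun e he => hC' e (Finset.mem_sdiff.1 he).1
  rw [e1, e2, eq_div_iff (by positivity), ← pow_add, ← pow_add,
    ← Finset.card_sdiff_add_card_eq_card hFE]
  congr 1
  lia

open Classical in
/-- Number of elements of `E` spanned by the vertex set `S`. -/
def spanCount {VH : Type*} (E : Finset (Sym2 VH)) (S : Finset VH) : ℕ :=
  (E.filter fun e => ∀ x ∈ e, x ∈ S).card

open Classical in
/-- The second moment error term. -/
def errTerm {VH : Type*} [Fintype VH] (E : Finset (Sym2 VH)) (N k p : ℝ) : ℝ :=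
  ∑ S ∈ (Finset.univ : Finset (Finset VH)).filter (fun S => 1 ≤ spanCount E S),
    1 / (N * k ^ S.card * p ^ spanCount E S)

open Classical in
/-- The agreement set of two functions. -/
def agree {VH : Type*} [Fintype VH] {k : ℕ} (φ φ' : VH → Fin k) : Finset VH :=
  Finset.univ.filter fun x => φ x = φ' x

open Classical in
lemma card_agree {VH : Type*} [Fintype VH] {k : ℕ} (hk : 1 ≤ k) (φ : VH → Fin k)
    (S : Finset VH) :
    (((Finset.univ : Finset (VH → Fin k)).filter fun φ' => agree φ φ' = S).card : ℝ) ≤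
      (k : ℝ) ^ Fintype.card VH / (k : ℝ) ^ S.card := by
  have hsub : ((Finset.univ : Finset (VH → Fin k)).filter fun φ' => agree φ φ' = S) ⊆
      Fintype.piFinset fun x => if x ∈ S then {φ x} else Finset.univ := by
    intro φ' h
    rw [Finset.mem_filter] at h
    rw [Fintype.mem_piFinset]
    intro x
    split_ifs with hx
    · rw [← h.2, agree, Finset.mem_filter] at hx
      simp [hx.2]
    · simp
  have h1 := Finset.card_le_card hsub
  rw [Fintype.card_piFinset] at h1
  have h2 : ∏ x : VH, (if x ∈ S then {φ x} else (Finset.univ : Finset (Fin k))).card =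
      k ^ (Finset.univ \ S).card := by
    rw [← Finset.prod_sdiff (Finset.subset_univ S)]
    rw [Finset.prod_eq_one (s := S) (fun x hx => by simp [hx]), mul_one]
    refine Finset.prod_eq_pow_card fun x hx => ?_
    rw [if_neg (Finset.mem_sdiff.1 hx).2]; simp
  rw [h2] at h1
  have hk0 : (0 : ℝ) < k := by exact_mod_cast hk
  rw [le_div_iff₀ (by positivity)]
  have h3 : (k : ℝ) ^ Fintype.card VH = (k : ℝ) ^ (Finset.univ \ S).card * (k : ℝ) ^ S.card := by
    rw [← pow_add, Finset.card_sdiff_add_card_eq_card (Finset.subset_univ S), Finset.card_univ]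
  rw [h3]
  gcongr
  exact_mod_cast h1

open Classical in
lemma sum_pairs {VH : Type*} [Fintype VH] (E : Finset (Sym2 VH)) {N k : ℕ} (hN : 1 ≤ N)
    (hk : 1 ≤ k) (p : ℝ) (hp : 0 < p)
    (w : ℕ × (VH → Fin k) → ℕ × (VH → Fin k) → ℝ)
    (hw : ∀ a b, w a b ≤ p ^ (2 * E.card) +
      if a.1 = b.1 ∧ 1 ≤ spanCount E (agree a.2 b.2) then
        p ^ (2 * E.card) / p ^ spanCount E (agree a.2 b.2) else 0) :
    ∑ a ∈ Finset.range N ×ˢ (Finset.univ : Finset (VH → Fin k)),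
      ∑ b ∈ Finset.range N ×ˢ (Finset.univ : Finset (VH → Fin k)), w a b ≤
    (1 + errTerm E N k p) *
      (((Finset.range N ×ˢ (Finset.univ : Finset (VH → Fin k))).card : ℝ) * p ^ E.card) ^ 2 := by
  have hk0 : (0 : ℝ) < k := by exact_mod_cast hk
  have hN0 : (0 : ℝ) < N := by exact_mod_cast hN
  have hcard : ((Finset.range N ×ˢ (Finset.univ : Finset (VH → Fin k))).card : ℝ) =
      N * (k : ℝ) ^ Fintype.card VH := by
    rw [Finset.card_product]; simp
  set m := E.card
  set v := Fintype.card VH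
  have inner : ∀ φ : VH → Fin k,
      ∑ φ' : VH → Fin k, (if 1 ≤ spanCount E (agree φ φ') then
        p ^ (2 * m) / p ^ spanCount E (agree φ φ') else 0) ≤
      N * (k : ℝ) ^ v * p ^ (2 * m) * errTerm E N k p := by
    intro φ
    rw [← Finset.sum_fiberwise (s := Finset.univ) (g := fun φ' => agree φ φ')]
    rw [errTerm, Finset.sum_filter, Finset.mul_sum]
    refine Finset.sum_le_sum fun S _ => ?_
    have : ∀ φ' ∈ (Finset.univ : Finset (VH → Fin k)).filter (fun φ' => agree φ φ' = S),
        (if 1 ≤ spanCount E (agree φ φ') then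
        p ^ (2 * m) / p ^ spanCount E (agree φ φ') else 0) =
        (if 1 ≤ spanCount E S then p ^ (2 * m) / p ^ spanCount E S else 0) := by
      intro φ' h
      rw [(Finset.mem_filter.1 h).2]
    rw [Finset.sum_congr rfl this, Finset.sum_const, nsmul_eq_mul]
    split_ifs
    · refine (mul_le_mul_of_nonneg_right (card_agree hk φ S) (by positivity)).trans (le_of_eq ?_)
      field_simp
      try rfl
    · simp
  have step : ∀ a ∈ Finset.range N ×ˢ (Finset.univ : Finset (VH → Fin k)),
      ∑ b ∈ Finset.range N ×ˢ (Finset.univ : Finset (VH → Fin k)), w a b ≤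
      N * (k : ℝ) ^ v * p ^ (2 * m) + N * (k : ℝ) ^ v * p ^ (2 * m) * errTerm E N k p := by
    intro a ha
    refine (Finset.sum_le_sum fun b _ => hw a b).trans ?_
    rw [Finset.sum_add_distrib, Finset.sum_const, nsmul_eq_mul, hcard]
    refine add_le_add le_rfl ?_
    rw [Finset.sum_product]
    rw [Finset.sum_eq_single a.1]
    · simpa using inner a.2
    · intro j _ hj
      refine Finset.sum_eq_zero fun φ' _ => if_neg ?_
      rintro ⟨h, _⟩; exact hj h.symm
    · intro h; exact absurd (Finset.mem_product.1 ha).1 h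
  refine (Finset.sum_le_sum step).trans (le_of_eq ?_)
  rw [Finset.sum_const, nsmul_eq_mul, hcard]
  ring

/-! ## The bound for a fixed number of vertices -/

/-- The partite embedding associated to `φ`. -/
def emb {VH : Type*} {n k : ℕ} (j : VH × Fin k ↪ Fin n) (φ : VH → Fin k) (x : VH) : Fin n :=
  j (x, φ x)

lemma emb_inj {VH : Type*} {n k : ℕ} (j : VH × Fin k ↪ Fin n) (φ : VH → Fin k) :
    Function.Injective (emb j φ) := by
  intro x y h
  exact congrArg Prod.fst (j.injective h)

lemma emb_map {VH : Type*} {n k : ℕ} (j : VH × Fin k ↪ Fin n) (φ φ' : VH → Fin k)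
    {e e' : Sym2 VH} (h : Sym2.map (emb j φ) e = Sym2.map (emb j φ') e') : e = e' := by
  have h1 : ∀ (φ : VH → Fin k) (e : Sym2 VH),
      Sym2.map (emb j φ) e = Sym2.map j (Sym2.map (fun x => (x, φ x)) e) := by
    intro φ e; rw [Sym2.map_map]; rfl
  rw [h1, h1] at h
  have h2 := congrArg (Sym2.map Prod.fst) (Sym2.map.injective j.injective h)
  rw [Sym2.map_map, Sym2.map_map] at h2
  have h3 : ∀ φ : VH → Fin k, (Prod.fst ∘ fun x => (x, φ x)) = (id : VH → VH) := fun φ => rfl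
  rw [h3, h3] at h2
  simpa using h2

lemma emb_map_iff {VH : Type*} [Fintype VH] {n k : ℕ} (j : VH × Fin k ↪ Fin n)
    (φ φ' : VH → Fin k) (e : Sym2 VH) :
    Sym2.map (emb j φ) e = Sym2.map (emb j φ') e ↔ ∀ x ∈ e, x ∈ agree φ φ' := by
  classical
  constructor
  · intro h x hx
    have h1 : emb j φ x ∈ Sym2.map (emb j φ') e := by
      rw [← h]; exact Sym2.mem_map.2 ⟨x, hx, rfl⟩
    obtain ⟨y, _, hyx⟩ := Sym2.mem_map.1 h1
    have h2 := j.injective hyx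
    simp only [Prod.mk.injEq] at h2
    obtain ⟨rfl, h3⟩ := h2
    simp [agree, h3]
  · intro h
    refine Sym2.map_congr fun x hx => ?_
    have := h x hx
    simp only [agree, Finset.mem_filter] at this
    simp [emb, this.2]

/-- Time block number `a` of length `b`. -/
def block (b a : ℕ) : Set ℝ := Set.Ioc ((a * b : ℕ) : ℝ) ((a * b + b : ℕ) : ℝ)

lemma block_disj {b a a' : ℕ} {x : ℝ} (h : x ∈ block b a) (h' : x ∈ block b a') : a = a' := by
  have key : ∀ a a' : ℕ, x ∈ block b a → x ∈ block b a' → ¬ a < a' := by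
    intro a a' h h' hlt
    have h1 : a * b + b ≤ a' * b := by nlinarith
    have h2 : ((a * b + b : ℕ) : ℝ) ≤ ((a' * b : ℕ) : ℝ) := by exact_mod_cast h1
    have := h.2
    have := h'.1
    linarith
  have := key a a' h h'
  have := key a' a h' h
  lia

lemma finite_bound {VH : Type} [Fintype VH] (H : SimpleGraph VH) (E : Finset (Sym2 VH))
    (hE : ∀ e, e ∈ E ↔ e ∈ H.edgeSet)
    (P : Sym2 VH → Sym2 VH → Prop) (hP : StrictPartialOrderOn H.edgeSet P)
    (ψ : Measure ℕ) (hψ : IsLMD ψ) {n T b h N k β : ℕ} (lev : Sym2 VH → ℕ)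
    (hlev : ∀ e f, P e f → lev e < lev f) (hlev' : ∀ e ∈ E, lev e < h)
    (hb : 1 ≤ b) (hT : 1 ≤ T) (hNT : N * (h * b) ≤ T) (hkn : Fintype.card VH * k ≤ n)
    (hk : 1 ≤ k) (hN : 1 ≤ N) (hhb : h * b ≤ β) :
    1 - errTerm E N k (lmdPos ψ * (b / T)) ≤
      (discModel (Fin n) ψ T).real {ω | Contains H P (toTGraph ω) (β : ℝ)} := by
  classical
  have hq := lmdPos_pos hψ
  have := hψ.1
  have := unifDisc_prob hT
  have hQp := edgeMeasure_prob (unifDisc T) ψ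
  obtain ⟨ι⟩ : Nonempty (VH × Fin k ↪ Fin n) :=
    Function.Embedding.nonempty_of_card_le (by simpa using hkn)
  set p : ℝ := lmdPos ψ * (b / T) with hp
  have hT0 : (0 : ℝ) < T := by exact_mod_cast hT
  have hb0 : (0 : ℝ) < b := by exact_mod_cast hb
  have hp0 : 0 < p := by positivity
  have hblockm : ∀ a, MeasurableSet (block b a) := fun a => measurableSet_Ioc
  set Q := edgeMeasure (unifDisc T) ψ with hQ
  have hQb : ∀ j, j < N → ∀ e ∈ E, Q.real (firstIn (block b (j * h + lev e))) = p := by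
    intro j hj e he
    have hle := hlev' e he
    have h1 : (j * h + lev e) * b + b ≤ T := by
      have h2 : (j + 1) * (h * b) ≤ N * (h * b) := Nat.mul_le_mul_right _ hj
      have h3 : (lev e + 1) * b ≤ h * b := Nat.mul_le_mul_right _ hle
      nlinarith
    rw [Measure.real, hQ, edgeMeasure_firstIn _ _ (hblockm _), block, unifDisc_Ioc h1,
      ENNReal.toReal_mul, ENNReal.toReal_mul, ENNReal.toReal_inv, ENNReal.toReal_natCast,
      ENNReal.toReal_natCast, hp, lmdPos]
    ring
  set A : ℕ × (VH → Fin k) → Set (Sym2 (Fin n) → LabelSpace) := fun a =>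
    {ω | ∀ e ∈ E, ω (Sym2.map (emb ι a.2) e) ∈ firstIn (block b (a.1 * h + lev e))} with hA
  have hAm : ∀ a, MeasurableSet (A a) := by
    intro a
    have : A a = ⋂ e ∈ E, (fun ω : Sym2 (Fin n) → LabelSpace => ω (Sym2.map (emb ι a.2) e)) ⁻¹'
        firstIn (block b (a.1 * h + lev e)) := by
      ext ω; simp [hA]
    rw [this]
    exact Finset.measurableSet_biInter E fun e _ =>
      measurable_pi_apply _ (measurableSet_firstIn (hblockm _))
  have hinj : ∀ φ : VH → Fin k, Set.InjOn (fun e => Sym2.map (emb ι φ) e) (E : Set (Sym2 VH)) :=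
    fun φ e _ e' _ hee => emb_map ι φ φ hee
  have hμ : discModel (Fin n) ψ T = Measure.pi fun _ : Sym2 (Fin n) => Q := rfl
  have : IsProbabilityMeasure (discModel (Fin n) ψ T) := by rw [hμ]; infer_instance
  set s := Finset.range N ×ˢ (Finset.univ : Finset (VH → Fin k)) with hs
  have hsN : ∀ a ∈ s, a.1 < N := fun a ha => Finset.mem_range.1 (Finset.mem_product.1 ha).1
  have hsne : s.Nonempty := by
    refine ⟨(0, fun _ => ⟨0, hk⟩), ?_⟩
    rw [hs, Finset.mem_product]
    exact ⟨Finset.mem_range.2 hN, Finset.mem_univ _⟩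
  have hA1 : ∀ a ∈ s, (discModel (Fin n) ψ T).real (A a) = p ^ E.card := by
    intro a ha
    rw [hμ, Measure.real, pi_inj_prob Q E _ (hinj a.2), ENNReal.toReal_prod]
    exact Finset.prod_eq_pow_card fun e he => hQb a.1 (hsN a ha) e he
  -- the joint probabilities
  have hpair : ∀ a b, (if a ∈ s ∧ b ∈ s then (discModel (Fin n) ψ T).real (A a ∩ A b) else 0) ≤
      p ^ (2 * E.card) + if a.1 = b.1 ∧ 1 ≤ spanCount E (agree a.2 b.2) then
        p ^ (2 * E.card) / p ^ spanCount E (agree a.2 b.2) else 0 := by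
    intro a c
    have hpos : 0 ≤ if a.1 = c.1 ∧ 1 ≤ spanCount E (agree a.2 c.2) then
        p ^ (2 * E.card) / p ^ spanCount E (agree a.2 c.2) else 0 := by
      split_ifs <;> positivity
    have hpos2 : 0 ≤ p ^ (2 * E.card) := by positivity
    by_cases hac : a ∈ s ∧ c ∈ s
    swap
    · rw [if_neg hac]; positivity
    rw [if_pos hac]
    have hjb : (discModel (Fin n) ψ T).real (A a ∩ A c) ≤
        p ^ (2 * E.card) / p ^ spanCount E (agree a.2 c.2) := by
      have := pair_bound Q E (fun e => Sym2.map (emb ι a.2) e) (fun e => Sym2.map (emb ι c.2) e)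
        (hinj a.2) (hinj c.2) (fun e _ e' _ h => emb_map ι a.2 c.2 h)
        (fun e => firstIn (block b (a.1 * h + lev e)))
        (fun e => firstIn (block b (c.1 * h + lev e))) p hp0
        (fun e he => hQb a.1 (hsN a hac.1) e he) (fun e he => hQb c.1 (hsN c hac.2) e he)
      refine this.trans (le_of_eq ?_)
      congr 2
      rw [spanCount]
      congr 1
      ext e
      simp only [Finset.mem_filter]
      rw [emb_map_iff]
    by_cases hf : 1 ≤ spanCount E (agree a.2 c.2)
    · by_cases hj : a.1 = c.1
      · rw [if_pos ⟨hj, hf⟩]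
        linarith
      · have hempty : A a ∩ A c = ∅ := by
          rw [Set.eq_empty_iff_forall_notMem]
          rintro ω ⟨h1, h2⟩
          obtain ⟨e, he⟩ := Finset.card_pos.1 hf
          simp only [Finset.mem_filter] at he
          have heq := (emb_map_iff ι a.2 c.2 e).2 he.2
          have h1' := h1 e he.1
          have h2' := h2 e he.1
          rw [← heq] at h2'
          obtain ⟨x, hx⟩ := h1'
          obtain ⟨y, hy⟩ := h2'
          have h3 := block_disj hx hy
          have h4 : a.1 * h = c.1 * h := by lia
          have h5 := hlev' e he.1
          exact hj (Nat.eq_of_mul_eq_mul_right (by lia) h4)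
        rw [hempty]
        simp only [measureReal_empty]
        positivity
    · have h0 : spanCount E (agree a.2 c.2) = 0 := by lia
      rw [h0, pow_zero, div_one] at hjb
      linarith
  have hsum := sum_pairs E hN hk p hp0 _ hpair
  have hsum' : ∑ a ∈ s, ∑ c ∈ s, (discModel (Fin n) ψ T).real (A a ∩ A c) ≤
      (1 + errTerm E N k p) * ((s.card : ℝ) * p ^ E.card) ^ 2 := by
    refine le_trans (le_of_eq ?_) hsum
    refine Finset.sum_congr rfl fun a ha => Finset.sum_congr rfl fun c hc => ?_
    rw [if_pos ⟨ha, hc⟩]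
  have hfin := second_moment (discModel (Fin n) ψ T) s A (fun a _ => hAm a) (p ^ E.card)
    (errTerm E N k p) (by positivity) hsne hA1 hsum'
  refine hfin.trans (measureReal_mono ?_ (measure_ne_top _ _))
  intro ω hω
  obtain ⟨a, ha, hωa⟩ := Set.mem_iUnion₂.1 hω
  have hlab : ∀ e : Sym2 VH, ∃ x : ℝ, e ∈ E → x ∈ toTGraph ω (Sym2.map (emb ι a.2) e) ∧
      x ∈ block b (a.1 * h + lev e) := by
    intro e
    by_cases he : e ∈ E
    · obtain ⟨h0, h1⟩ := hωa e he
      refine ⟨_, fun _ => ⟨?_, h1⟩⟩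
      rw [toTGraph, if_neg]
      · exact Finset.mem_image_of_mem _ (Finset.mem_univ _)
      · rw [Sym2.isDiag_map (emb_inj ι a.2)]
        exact H.not_isDiag_of_mem_edgeSet ((hE e).1 he)
    · exact ⟨0, fun h => absurd h he⟩
  choose lab hlab using hlab
  refine ⟨emb ι a.2, emb_inj ι a.2, lab, fun e he => (hlab e ((hE e).2 he)).1, ?_, ?_⟩
  · intro e f hef
    have hh := hP.2.2 e f hef
    have h1 := (hlab e ((hE e).2 hh.1)).2.2
    have h2 := (hlab f ((hE f).2 hh.2)).2.1
    have h3 := hlev e f hef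
    have h4 : (a.1 * h + lev e) * b + b ≤ (a.1 * h + lev f) * b := by nlinarith
    have h5 : (((a.1 * h + lev e) * b + b : ℕ) : ℝ) ≤ (((a.1 * h + lev f) * b : ℕ) : ℝ) := by
      exact_mod_cast h4
    linarith
  · intro e he f hf
    have h1 := (hlab e ((hE e).2 he)).2.2
    have h2 := (hlab f ((hE f).2 hf)).2.1
    have h3 := hlev' e ((hE e).2 he)
    have h4 : (a.1 * h + lev e) * b + b ≤ (a.1 * h + lev f) * b + β := by
      have : (lev e + 1) * b ≤ h * b := Nat.mul_le_mul_right _ h3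
      nlinarith [Nat.zero_le (lev f * b)]
    have h5 : (((a.1 * h + lev e) * b + b : ℕ) : ℝ) ≤
        (((a.1 * h + lev f) * b : ℕ) : ℝ) + (β : ℝ) := by
      exact_mod_cast h4
    linarith

/-! ## Asymptotics -/

lemma sparsity_le {VH : Type} [Fintype VH] (H : SimpleGraph VH) (E : Finset (Sym2 VH))
    (hE : ∀ e, e ∈ E ↔ e ∈ H.edgeSet) (S : Finset VH) (hS : 2 ≤ spanCount E S) :
    sparsity H * ((spanCount E S : ℝ) - 1) ≤ S.card := by
  classical
  set I : H.Subgraph := (⊤ : H.Subgraph).induce (S : Set VH) with hI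
  have hv : I.verts.ncard = S.card := by
    simp [hI]
  have he : I.edgeSet.ncard = spanCount E S := by
    rw [spanCount, ← Set.ncard_coe_finset]
    congr 1
    ext e
    induction e with
    | _ x y =>
      simp only [hI, SimpleGraph.Subgraph.mem_edgeSet, SimpleGraph.Subgraph.induce_adj,
        SimpleGraph.Subgraph.top_adj, Finset.coe_filter, Set.mem_ofPred_eq, hE,
        SimpleGraph.mem_edgeSet, Finset.mem_coe, Sym2.mem_iff]
      constructor
      · rintro ⟨hx, hy, h⟩
        refine ⟨h, ?_⟩
        rintro z (rfl | rfl) <;> assumption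
      · rintro ⟨h, h2⟩
        exact ⟨h2 x (Or.inl rfl), h2 y (Or.inr rfl), h⟩
  have h2 : (2 : ℝ) ≤ spanCount E S := by exact_mod_cast hS
  have hle : sparsity H ≤ (S.card : ℝ) / ((spanCount E S : ℝ) - 1) := by
    refine csInf_le ⟨0, ?_⟩ ⟨I, by rw [he]; exact hS, by rw [hv, he]⟩
    rintro x ⟨J, hJ, rfl⟩
    have : (2 : ℝ) ≤ J.edgeSet.ncard := by exact_mod_cast hJ
    exact div_nonneg (Nat.cast_nonneg _) (by linarith)
  rwa [le_div_iff₀ (by linarith)] at hle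

lemma card_pos_of_span {VH : Type} (E : Finset (Sym2 VH)) (S : Finset VH)
    (hS : 1 ≤ spanCount E S) : 1 ≤ S.card := by
  obtain ⟨e, he⟩ := Finset.card_pos.1 hS
  simp only [Finset.mem_filter] at he
  induction e with
  | _ x y => exact Finset.card_pos.2 ⟨x, he.2 x (by simp)⟩

lemma main_term {x : ℕ → ℝ} (hx : ∀ n, 0 ≤ x n) {ρ : ℝ} {s f : ℕ} (hs : 1 ≤ s) (hf : 1 ≤ f)
    (hρ : 2 ≤ f → ρ * ((f : ℝ) - 1) ≤ s)
    (hthr : Tendsto (fun n : ℕ => x n * (n : ℝ) ^ ρ) atTop atTop) :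
    Tendsto (fun n : ℕ => (n : ℝ) ^ s * x n ^ (f - 1)) atTop atTop := by
  rcases Nat.lt_or_ge f 2 with h | h
  · have : f - 1 = 0 := by lia
    simp only [this, pow_zero, mul_one]
    exact (tendsto_pow_atTop (by lia)).comp tendsto_natCast_atTop_atTop
  · have h1 : Tendsto (fun n : ℕ => (x n * (n : ℝ) ^ ρ) ^ (f - 1)) atTop atTop :=
      (tendsto_pow_atTop (by lia)).comp hthr
    refine tendsto_atTop_mono' _ ?_ h1
    filter_upwards [eventually_ge_atTop 1] with n hn
    have hn1 : (1 : ℝ) ≤ n := by exact_mod_cast hn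
    rw [mul_pow, mul_comm]
    refine mul_le_mul_of_nonneg_right ?_ (pow_nonneg (hx n) _)
    rw [← Real.rpow_natCast ((n : ℝ) ^ ρ), ← Real.rpow_mul (by linarith), ← Real.rpow_natCast]
    refine Real.rpow_le_rpow_of_exponent_le hn1 ?_
    rw [Nat.cast_sub (by lia)]
    simpa using hρ h

lemma err_tendsto {VH : Type} [Fintype VH] (H : SimpleGraph VH) (E : Finset (Sym2 VH))
    (hE : ∀ e, e ∈ E ↔ e ∈ H.edgeSet) {x N k p : ℕ → ℝ} (hx : ∀ n, 0 ≤ x n) {c d : ℝ}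
    (hc : 0 < c) (hd : 0 < d)
    (hev : ∀ᶠ n : ℕ in atTop, c ≤ N n * p n ∧ d * n ≤ k n ∧ c * x n ≤ p n)
    (hthr : Tendsto (fun n : ℕ => x n * (n : ℝ) ^ sparsity H) atTop atTop) :
    Tendsto (fun n => errTerm E (N n) (k n) (p n)) atTop (𝓝 0) := by
  classical
  unfold errTerm
  rw [show (0 : ℝ) = ∑ S ∈ (Finset.univ : Finset (Finset VH)).filter
    (fun S => 1 ≤ spanCount E S), (0 : ℝ) by simp]
  refine tendsto_finsetSum _ fun S hS => ?_
  have hf : 1 ≤ spanCount E S := by simpa using hS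
  have hmain := main_term hx (card_pos_of_span E S hf) hf (sparsity_le H E hE S) hthr
  set s := S.card
  set f := spanCount E S
  have h2 : Tendsto (fun n : ℕ => (c * d ^ s * c ^ (f - 1)) * ((n : ℝ) ^ s * x n ^ (f - 1)))
      atTop atTop := hmain.const_mul_atTop (by positivity)
  have h3 : Tendsto (fun n => N n * k n ^ s * p n ^ f) atTop atTop := by
    refine tendsto_atTop_mono' _ ?_ h2
    filter_upwards [hev] with n hn
    obtain ⟨e1, e2, e3⟩ := hn
    have e4 : N n * k n ^ s * p n ^ f = (N n * p n) * k n ^ s * p n ^ (f - 1) := by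
      have : p n ^ f = p n * p n ^ (f - 1) := by
        rw [← pow_succ']; congr 1; lia
      rw [this]; ring
    rw [e4]
    have hn0 : (0 : ℝ) ≤ n := Nat.cast_nonneg n
    have hxn := hx n
    calc (c * d ^ s * c ^ (f - 1)) * ((n : ℝ) ^ s * x n ^ (f - 1))
        = c * (d * n) ^ s * (c * x n) ^ (f - 1) := by rw [mul_pow, mul_pow]; ring
      _ ≤ (N n * p n) * k n ^ s * p n ^ (f - 1) := by
        have : (d * n) ^ s ≤ k n ^ s := pow_le_pow_left₀ (by positivity) e2 _
        have : (c * x n) ^ (f - 1) ≤ p n ^ (f - 1) := pow_le_pow_left₀ (by positivity) e3 _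
        have : 0 ≤ N n * p n := by linarith
        have : 0 ≤ k n := le_trans (by positivity) e2
        gcongr
  have := h3.inv_tendsto_atTop
  simp only [one_div]
  exact this

/-- If `β(n)/T(n)·n^{ρ_H} → ∞` (and `β(n)` is eventually at least the
height of `P`), then a sample of `Γ_{[n]}(ψ, T(n))` contains `(H, P)` as a
`β(n)`-temporal motif with high probability. -/
theorem statement2 {VH : Type} [Fintype VH] [DecidableEq VH] (H : SimpleGraph VH)
    (hH : 2 ≤ H.edgeSet.ncard)
    (P : Sym2 VH → Sym2 VH → Prop) (hP : StrictPartialOrderOn H.edgeSet P)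
    (ψ : Measure ℕ) (hψ : IsLMD ψ)
    (β T : ℕ → ℕ) (hβT : ∀ n, β n ≤ T n)
    (hheight : ∃ n₀ : ℕ, ∀ n ≥ n₀, ∀ s : Finset (Sym2 VH),
      ↑s ⊆ H.edgeSet → IsChain P ↑s → s.card ≤ β n)
    (hthr : Tendsto (fun n : ℕ => (β n : ℝ) / (T n : ℝ) * (n : ℝ) ^ sparsity H)
      atTop atTop) :
    Tendsto (fun n : ℕ =>
        discModel (Fin n) ψ (T n) {ω | Contains H P (toTGraph ω) (β n : ℝ)})
      atTop (𝓝 1) := by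
  classical
  set E : Finset (Sym2 VH) := (Set.toFinite H.edgeSet).toFinset with hEdef
  have hE : ∀ e, e ∈ E ↔ e ∈ H.edgeSet := fun e => by simp [hEdef]
  have hEc : (E : Set (Sym2 VH)) = H.edgeSet := by ext e; exact hE e
  have hEne : E.Nonempty := by
    rw [← Finset.card_pos, ← Set.ncard_coe_finset, hEc]; lia
  obtain ⟨h, lev, h1, ⟨s, hsE, hsc, hsh⟩, hlev, hlev'⟩ :=
    exists_lev E hEne P (by rw [hEc]; exact hP)
  obtain ⟨n₀, hn₀⟩ := hheight
  have hβ : ∀ n ≥ n₀, h ≤ β n := by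
    intro n hn
    rw [← hsh]
    exact hn₀ n hn s (by rw [← hEc]; exact_mod_cast hsE) hsc
  have hVne : Nonempty VH := by
    obtain ⟨e, _⟩ := hEne
    induction e with
    | _ x y => exact ⟨x⟩
  set v := Fintype.card VH with hv
  have hv1 : 1 ≤ v := Fintype.card_pos
  have hq := lmdPos_pos hψ
  set q := lmdPos ψ with hqdef
  set b : ℕ → ℕ := fun n => β n / h with hb
  set N : ℕ → ℕ := fun n => T n / (h * b n) with hN
  set k : ℕ → ℕ := fun n => n / v with hk
  have facts : ∀ n, n₀ ≤ n → v ≤ n → 1 ≤ b n ∧ 1 ≤ T n ∧ N n * (h * b n) ≤ T n ∧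
      v * k n ≤ n ∧ 1 ≤ k n ∧ 1 ≤ N n ∧ h * b n ≤ β n ∧ β n ≤ 2 * h * b n ∧
      T n ≤ 2 * h * (N n * b n) ∧ n ≤ 2 * v * k n := by
    intro n hn hvn
    have a1 := hβ n hn
    have a2 := hβT n
    have b1 : 1 ≤ b n := (Nat.one_le_div_iff (by lia)).2 a1
    have b2 : h * b n ≤ β n := Nat.mul_div_le _ _
    have b3 : β n < h * (b n + 1) := Nat.lt_mul_div_succ _ (by lia)
    have b4 : 0 < h * b n := by positivity
    have c1 : 1 ≤ N n := (Nat.one_le_div_iff b4).2 (by lia)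
    have c2 : h * b n * N n ≤ T n := Nat.mul_div_le _ _
    have c3 : T n < h * b n * (N n + 1) := Nat.lt_mul_div_succ _ b4
    have d1 : 1 ≤ k n := (Nat.one_le_div_iff (by lia)).2 hvn
    have d2 : v * k n ≤ n := Nat.mul_div_le _ _
    have d3 : n < v * (k n + 1) := Nat.lt_mul_div_succ _ (by lia)
    refine ⟨b1, by lia, by nlinarith, d2, d1, c1, b2, by nlinarith, by nlinarith, by nlinarith⟩
  have hh0 : (0 : ℝ) < h := by exact_mod_cast h1
  have hv0 : (0 : ℝ) < v := by exact_mod_cast hv1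
  have herr : Tendsto (fun n => errTerm E (N n : ℝ) (k n : ℝ) (q * ((b n : ℝ) / (T n : ℝ))))
      atTop (𝓝 0) := by
    refine err_tendsto H E hE (x := fun n => (β n : ℝ) / (T n : ℝ)) (fun n => by positivity)
      (c := q / (2 * h)) (d := 1 / (2 * v)) (by positivity) (by positivity) ?_ hthr
    filter_upwards [eventually_ge_atTop n₀, eventually_ge_atTop v] with n hn hvn
    obtain ⟨f1, f2, f3, f4, f5, f6, f7, f8, f9, f10⟩ := facts n hn hvn
    have hT0 : (0 : ℝ) < T n := by exact_mod_cast f2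
    have g8 : (β n : ℝ) ≤ 2 * h * b n := by exact_mod_cast f8
    have g9 : (T n : ℝ) ≤ 2 * h * (N n * b n) := by exact_mod_cast f9
    have g10 : (n : ℝ) ≤ 2 * v * k n := by exact_mod_cast f10
    refine ⟨?_, ?_, ?_⟩
    · have e : (N n : ℝ) * (q * ((b n : ℝ) / (T n : ℝ))) = q * (N n * b n) / T n := by ring
      rw [e, div_le_div_iff₀ (by positivity) hT0]
      nlinarith
    · rw [one_div, inv_mul_le_iff₀ (by positivity)]
      exact g10
    · have e1 : q / (2 * h) * ((β n : ℝ) / (T n : ℝ)) = q * β n / (2 * h) / T n := by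
        field_simp
      have e2 : q * ((b n : ℝ) / (T n : ℝ)) = q * b n / T n := by ring
      rw [e1, e2]
      refine div_le_div_of_nonneg_right ?_ hT0.le
      rw [div_le_iff₀ (by positivity)]
      nlinarith
  have hlow : Tendsto (fun n => ENNReal.ofReal
      (1 - errTerm E (N n : ℝ) (k n : ℝ) (q * ((b n : ℝ) / (T n : ℝ))))) atTop (𝓝 1) := by
    have := ENNReal.tendsto_ofReal ((tendsto_const_nhds (x := (1 : ℝ))).sub herr)
    simpa using this
  refine tendsto_of_tendsto_of_tendsto_of_le_of_le' hlow tendsto_const_nhds ?_ ?_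
  · filter_upwards [eventually_ge_atTop n₀, eventually_ge_atTop v] with n hn hvn
    obtain ⟨f1, f2, f3, f4, f5, f6, f7, f8, f9, f10⟩ := facts n hn hvn
    have := finite_bound H E hE P hP ψ hψ lev hlev hlev' f1 f2 f3 f4 f5 f6 f7
    exact (ENNReal.ofReal_le_ofReal this).trans ENNReal.ofReal_toReal_le
  · filter_upwards [eventually_ge_atTop n₀, eventually_ge_atTop v] with n hn hvn
    obtain ⟨f1, f2, f3, f4, f5, f6, f7, f8, f9, f10⟩ := facts n hn hvn
    have := hψ.1
    have := unifDisc_prob f2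
    have hQp := edgeMeasure_prob (unifDisc (T n)) ψ
    have : IsProbabilityMeasure (discModel (Fin n) ψ (T n)) := by
      change IsProbabilityMeasure (Measure.pi fun _ : Sym2 (Fin n) => edgeMeasure (unifDisc (T n)) ψ)
      infer_instance
    exact prob_le_one

end RTG
end
end
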